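/- Let M be a monoid, θ : M → M an endomorphism, and S = BR(M, θ) the Bruck–Reilly extension of M. If S is right coherent, then M is right coherent. -/

import Mathlib

def IsRightCongruence {M : Type*} [Monoid M] (r : M → M → Prop) : Prop :=
  Equivalence r ∧ ∀ a b c : M, r a b → r (a * c) (b * c)

def RCongGenBy {M : Type*} [Monoid M] (H : Set (M × M)) (r : M → M → Prop) : Prop :=
  IsRightCongruence r ∧ (∀ p ∈ H, r p.1 p.2) ∧
    ∀ r' : M → M → Prop, IsRightCongruence r' → (∀ p ∈ H, r' p.1 p.2) →
      ∀ x y : M, r x y → r' x y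

def FGRightCongruence {M : Type*} [Monoid M] (r : M → M → Prop) : Prop :=
  ∃ H : Set (M × M), H.Finite ∧ RCongGenBy H r

def RightCoherent (M : Type*) [Monoid M] : Prop :=
  ∀ r : M → M → Prop, FGRightCongruence r → ∀ a b : M,
    (∃ C : Finset M,
      {x : M | (∃ s : M, r x (a * s)) ∧ (∃ t : M, r x (b * t))} =
        ⋃ c ∈ C, {x : M | ∃ s : M, r x (c * s)}) ∧
    FGRightCongruence (fun u v : M => r (a * u) (a * v))

/-!
Embed `M` in `S = BR(M, θ)` as the submonoid `U = {(0, g, 0)}`. Two properties of `U` carry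
coherence down to `M`. It is left unitary (`us ∈ U` with `u ∈ U` forces `s ∈ U`), and each left
quotient `{s | xs ∈ U}` is a finitely generated right `U`-act: for `x = (0, g, b)` it is
`(b, 1, 0)U`, and for every other `x = (a, g, b)` it is empty.

Left unitarity makes every right congruence `ρ` on `M` the restriction of one on `S` for which `U`
is a union of classes, so the same holds for the right congruence `σ` on `S` generated by `ρ`.
Intersections of principal subacts and annihilators for `ρ` are then the traces on `U` of those
for `σ`; multiplying the finitely many generators given by the coherence of `S` by the generators
of the left quotients brings them into `U`.
-/

open MonoidHom (mrange)

section Transfer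

variable {M S : Type*} [Monoid M] [Monoid S]

/-- The right congruence generated by `H`, encoded as the intersection of all right congruences
containing `H`. -/
def rightCongruenceClosure (H : Set (M × M)) (x y : M) : Prop :=
  ∀ r : M → M → Prop, IsRightCongruence r → (∀ p ∈ H, r p.1 p.2) → r x y

theorem rCongGenBy_rightCongruenceClosure (H : Set (M × M)) :
    RCongGenBy H (rightCongruenceClosure H) where
  left :=
    ⟨⟨fun x _ hr _ => hr.1.refl x, fun h r hr hH => hr.1.symm (h r hr hH),
      fun h h' r hr hH => hr.1.trans (h r hr hH) (h' r hr hH)⟩,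
      fun _ _ c h r hr hH => hr.2 _ _ c (h r hr hH)⟩
  right := ⟨fun p hp _ _ hH => hH p hp, fun r hr hH _ _ h => h r hr hH⟩

theorem IsRightCongruence.comap {σ : S → S → Prop} (hσ : IsRightCongruence σ) (ι : M →* S) :
    IsRightCongruence fun m n => σ (ι m) (ι n) := by
  refine ⟨hσ.1.comap ι, fun a b c h => ?_⟩
  simpa only [map_mul] using hσ.2 _ _ (ι c) h

/-- The principal subact `(c r)M` of the quotient act `M / r`, encoded as the union of the classes
it consists of. -/
def principalSubact (r : M → M → Prop) (c : M) : Set M :=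
  {x | ∃ s, r x (c * s)}

/-- A left unitary submonoid: with `u` and `u * s` it contains `s`. -/
def IsLeftUnitary (U : Submonoid S) : Prop :=
  ∀ u ∈ U, ∀ s, u * s ∈ U → s ∈ U

/-- Every left quotient `{s | x * s ∈ U}` is a finitely generated (possibly empty) right
`U`-act. -/
def HasFGLeftQuotients (U : Submonoid S) : Prop :=
  ∀ x, ∃ T : Finset S, ∀ s, x * s ∈ U ↔ ∃ t ∈ T, ∃ u ∈ U, s = t * u

/-- The relation `σ` on `S` extends the relation `ρ` on `M` along `ι`: the image of `M` is a union
of `σ`-classes, on which `σ` restricts to `ρ`. -/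
def Extends (ι : M →* S) (ρ : M → M → Prop) (σ : S → S → Prop) : Prop :=
  ∀ m y, σ (ι m) y ↔ ∃ n, ι n = y ∧ ρ m n

/-- The syntactic right congruence of `τ` along `ι`: `x` and `y` are related when no right
multiplier `s` tells them apart, neither by membership of `x * s` and `y * s` in the image of `M`
nor by the `τ`-classes of their preimages. It is how right congruences on `M` are extended to
`S`. -/
def syntacticCongruence (ι : M →* S) (τ : M → M → Prop) (x y : S) : Prop :=
  ∀ s, (x * s ∈ mrange ι ↔ y * s ∈ mrange ι) ∧ ∀ m n, ι m = x * s → ι n = y * s → τ m n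

variable {ι : M →* S}

theorem IsLeftUnitary.map_mul_mem_iff (hU : IsLeftUnitary (mrange ι)) (m : M) (s : S) :
    ι m * s ∈ mrange ι ↔ s ∈ mrange ι :=
  ⟨hU _ ⟨m, rfl⟩ s, mul_mem ⟨m, rfl⟩⟩

theorem isRightCongruence_syntacticCongruence (hι : Function.Injective ι) {τ : M → M → Prop}
    (hτ : Equivalence τ) : IsRightCongruence (syntacticCongruence ι τ) := by
  refine ⟨⟨fun x s => ⟨Iff.rfl, fun m n hm hn => ?_⟩, fun {x y} h s => ⟨(h s).1.symm, ?_⟩,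
    fun {x y z} hxy hyz s => ⟨(hxy s).1.trans (hyz s).1, fun m n hm hn => ?_⟩⟩,
    fun x y c h s => ?_⟩
  · exact hι (hm.trans hn.symm) ▸ hτ.refl m
  · exact fun m n hm hn => hτ.symm ((h s).2 n m hn hm)
  · obtain ⟨k, hk⟩ := (hxy s).1.1 ⟨m, hm⟩
    exact hτ.trans ((hxy s).2 m k hm hk) ((hyz s).2 k n hk hn)
  · simpa only [mul_assoc] using h (c * s)

theorem extends_syntacticCongruence (hι : Function.Injective ι) (hU : IsLeftUnitary (mrange ι))
    {τ : M → M → Prop} (hτ : IsRightCongruence τ) :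
    Extends ι τ (syntacticCongruence ι τ) := by
  intro m y
  constructor
  · intro h
    obtain ⟨hmem, hrel⟩ := h 1
    simp only [mul_one] at hmem hrel
    obtain ⟨n, hn⟩ := hmem.1 ⟨m, rfl⟩
    exact ⟨n, hn, hrel m n rfl hn⟩
  · rintro ⟨n, rfl, hmn⟩ s
    refine ⟨(hU.map_mul_mem_iff m s).trans (hU.map_mul_mem_iff n s).symm, fun p q hp hq => ?_⟩
    obtain ⟨v, rfl⟩ := (hU.map_mul_mem_iff m s).1 ⟨p, hp⟩
    rw [← map_mul] at hp hq
    rw [hι hp, hι hq]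
    exact hτ.2 m n v hmn

theorem FGRightCongruence.exists_extends (hι : Function.Injective ι)
    (hU : IsLeftUnitary (mrange ι)) {ρ : M → M → Prop} (hρ : FGRightCongruence ρ) :
    ∃ σ, FGRightCongruence σ ∧ Extends ι ρ σ := by
  obtain ⟨H, hH, hρcong, hHρ, hρmin⟩ := hρ
  have hgen := rCongGenBy_rightCongruenceClosure (Prod.map ι ι '' H)
  refine ⟨_, ⟨_, hH.image _, hgen⟩, fun m y => ⟨fun h => ?_, ?_⟩⟩
  · have hext := extends_syntacticCongruence hι hU hρcong
    refine (hext m y).1 (h _ (isRightCongruence_syntacticCongruence hι hρcong.1) ?_)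
    rintro _ ⟨p, hp, rfl⟩
    exact (hext _ _).2 ⟨p.2, rfl, hHρ p hp⟩
  · rintro ⟨n, rfl, hmn⟩
    exact hρmin _ (hgen.1.comap ι) (fun p hp => hgen.2.1 _ ⟨p, hp, rfl⟩) m n hmn

theorem syntacticCongruence_of_generators (hι : Function.Injective ι) {τ : M → M → Prop}
    (hτ : IsRightCongruence τ) {x y : S}
    (hxy : ∀ s, x * s ∈ mrange ι ↔ y * s ∈ mrange ι) {T : Finset S}
    (hT : ∀ s, x * s ∈ mrange ι ↔ ∃ t ∈ T, ∃ u ∈ mrange ι, s = t * u)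
    (h : ∀ t ∈ T, ∀ m n, ι m = x * t → ι n = y * t → τ m n) : syntacticCongruence ι τ x y := by
  refine fun s => ⟨hxy s, fun p q hp hq => ?_⟩
  obtain ⟨t, ht, _, ⟨v, rfl⟩, rfl⟩ := (hT s).1 ⟨p, hp⟩
  obtain ⟨m, hm⟩ := (hT t).2 ⟨t, ht, 1, one_mem _, (mul_one t).symm⟩
  obtain ⟨n, hn⟩ := (hxy t).1 ⟨m, hm⟩
  rw [← mul_assoc, ← hm, ← map_mul] at hp
  rw [← mul_assoc, ← hn, ← map_mul] at hq
  rw [hι hp, hι hq]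
  exact hτ.2 m n v (h t ht m n hm hn)

namespace Extends

variable {ρ : M → M → Prop} {σ : S → S → Prop}

theorem rel_map_iff (h : Extends ι ρ σ) (hι : Function.Injective ι) (m n : M) :
    σ (ι m) (ι n) ↔ ρ m n := by
  simp [h m, hι.eq_iff]

theorem isRightCongruence (h : Extends ι ρ σ) (hι : Function.Injective ι)
    (hσ : IsRightCongruence σ) : IsRightCongruence ρ := by
  simpa only [h.rel_map_iff hι] using hσ.comap ι

theorem mem_mrange_iff (h : Extends ι ρ σ) (hσ : IsRightCongruence σ) {x y : S} (hxy : σ x y) :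
    x ∈ mrange ι ↔ y ∈ mrange ι := by
  constructor
  · rintro ⟨m, rfl⟩
    exact ((h m y).1 hxy).imp fun _ => And.left
  · rintro ⟨m, rfl⟩
    exact ((h m x).1 (hσ.1.symm hxy)).imp fun _ => And.left

theorem annihilator (h : Extends ι ρ σ) (hι : Function.Injective ι)
    (hU : IsLeftUnitary (mrange ι)) (a : M) :
    Extends ι (fun u v => ρ (a * u) (a * v)) (fun x y => σ (ι a * x) (ι a * y)) := by
  intro m y
  constructor
  · intro hmy
    simp only [← map_mul] at hmy
    obtain ⟨k, hk, -⟩ := (h _ _).1 hmy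
    obtain ⟨n, rfl⟩ := (hU.map_mul_mem_iff a y).1 ⟨k, hk⟩
    rw [← map_mul, h.rel_map_iff hι] at hmy
    exact ⟨n, rfl, hmy⟩
  · rintro ⟨n, rfl, hmn⟩
    simpa only [← map_mul, h.rel_map_iff hι] using hmn

-- A generating pair of `σ` may lie outside the image of `M`; multiplying it by the generators of
-- a left quotient yields generating pairs of `ρ`.
theorem fgRightCongruence (h : Extends ι ρ σ) (hι : Function.Injective ι)
    (hU : IsLeftUnitary (mrange ι)) (hfg : HasFGLeftQuotients (mrange ι))
    (hσ : FGRightCongruence σ) : FGRightCongruence ρ := by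
  obtain ⟨K, hK, hσcong, hKσ, hσmin⟩ := hσ
  choose T hT using hfg
  let K' : Set (M × M) :=
    Prod.map ι ι ⁻¹' ⋃ p ∈ K, (fun t => (p.1 * t, p.2 * t)) '' (T p.1 : Set S)
  have hK' : K'.Finite :=
    (hK.biUnion fun p _ => (T p.1).finite_toSet.image _).preimage (hι.prodMap hι).injOn
  have mem_K' {m n : M} : (m, n) ∈ K' ↔ ∃ p ∈ K, ∃ t ∈ T p.1, ι m = p.1 * t ∧ ι n = p.2 * t := by
    simp [K', eq_comm]
  refine ⟨K', hK', h.isRightCongruence hι hσcong, ?_, fun τ hτ hK'τ m n hmn => ?_⟩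
  · rintro ⟨m, n⟩ hmn
    obtain ⟨p, hp, t, -, hm, hn⟩ := mem_K'.1 hmn
    rw [← h.rel_map_iff hι, hm, hn]
    exact hσcong.2 _ _ t (hKσ p hp)
  · rw [← (extends_syntacticCongruence hι hU hτ).rel_map_iff hι]
    refine hσmin _ (isRightCongruence_syntacticCongruence hι hτ.1) (fun p hp => ?_) _ _
      ((h.rel_map_iff hι m n).2 hmn)
    exact syntacticCongruence_of_generators hι hτ
      (fun s => h.mem_mrange_iff hσcong (hσcong.2 _ _ s (hKσ p hp))) (hT p.1)
      fun t ht u v hu hv => hK'τ _ (mem_K'.2 ⟨p, hp, t, ht, hu, hv⟩)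

theorem preimage_principalSubact_map (h : Extends ι ρ σ) (hι : Function.Injective ι)
    (hU : IsLeftUnitary (mrange ι)) (a : M) :
    ι ⁻¹' principalSubact σ (ι a) = principalSubact ρ a := by
  ext m
  constructor
  · rintro ⟨s, hs⟩
    obtain ⟨n, hn, -⟩ := (h _ _).1 hs
    obtain ⟨v, rfl⟩ := (hU.map_mul_mem_iff a s).1 ⟨n, hn⟩
    rw [← map_mul, h.rel_map_iff hι] at hs
    exact ⟨v, hs⟩
  · rintro ⟨v, hv⟩
    exact ⟨ι v, by rwa [← map_mul, h.rel_map_iff hι]⟩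

theorem exists_preimage_principalSubact (h : Extends ι ρ σ) (hι : Function.Injective ι)
    (hfg : HasFGLeftQuotients (mrange ι)) (c : S) :
    ∃ D : Finset M, ι ⁻¹' principalSubact σ c = ⋃ d ∈ D, principalSubact ρ d := by
  classical
  obtain ⟨T, hT⟩ := hfg c
  refine ⟨(T.image (c * ·)).preimage ι hι.injOn, ?_⟩
  ext m
  simp only [Set.mem_iUnion, Finset.mem_preimage, Finset.mem_image, exists_prop]
  constructor
  · rintro ⟨s, hs⟩
    obtain ⟨n, hn, hmn⟩ := (h _ _).1 hs
    obtain ⟨t, ht, _, ⟨v, rfl⟩, rfl⟩ := (hT s).1 ⟨n, hn⟩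
    obtain ⟨d, hd⟩ := (hT t).2 ⟨t, ht, 1, one_mem _, (mul_one t).symm⟩
    rw [← mul_assoc, ← hd, ← map_mul] at hn
    exact ⟨d, ⟨t, ht, hd.symm⟩, v, hι hn ▸ hmn⟩
  · rintro ⟨d, ⟨t, -, hd⟩, v, hmv⟩
    refine ⟨t * ι v, ?_⟩
    rwa [← mul_assoc, hd, ← map_mul, h.rel_map_iff hι]

theorem exists_inter_principalSubact (h : Extends ι ρ σ) (hι : Function.Injective ι)
    (hU : IsLeftUnitary (mrange ι)) (hfg : HasFGLeftQuotients (mrange ι))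
    {a b : M} {C : Finset S}
    (hC : principalSubact σ (ι a) ∩ principalSubact σ (ι b) = ⋃ c ∈ C, principalSubact σ c) :
    ∃ D : Finset M, principalSubact ρ a ∩ principalSubact ρ b = ⋃ d ∈ D, principalSubact ρ d := by
  classical
  choose D hD using h.exists_preimage_principalSubact hι hfg
  refine ⟨C.biUnion D, ?_⟩
  rw [← h.preimage_principalSubact_map hι hU, ← h.preimage_principalSubact_map hι hU,
    ← Set.preimage_inter, hC, Finset.set_biUnion_biUnion]
  simp only [Set.preimage_iUnion, hD]

end Extends

theorem stmt13_general (hι : Function.Injective ι) (hU : IsLeftUnitary (mrange ι))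
    (hfg : HasFGLeftQuotients (mrange ι)) (hS : RightCoherent S) : RightCoherent M := by
  intro ρ hρ a b
  obtain ⟨σ, hσ, hext⟩ := hρ.exists_extends hι hU
  obtain ⟨⟨C, hC⟩, hann⟩ := hS σ hσ (ι a) (ι b)
  exact ⟨hext.exists_inter_principalSubact hι hU hfg hC,
    (hext.annihilator hι hU a).fgRightCongruence hι hU hfg hann⟩

end Transfer

/-- `f` identifies `S` with the Bruck–Reilly extension of `M` along `θ`. In each truncated
subtraction the subtrahend is at most the maximum, so no junk value occurs. -/
structure IsBruckReilly {M S : Type*} [Monoid M] [Monoid S] (θ : M →* M)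
    (f : ℕ × M × ℕ → S) : Prop where
  bijective : Function.Bijective f
  map_one : f (0, 1, 0) = 1
  map_mul (a : ℕ) (g : M) (b c : ℕ) (h : M) (d : ℕ) :
    f (a, g, b) * f (c, h, d) =
      f (a + (max b c - b), θ^[max b c - b] g * θ^[max b c - c] h, d + (max b c - c))

namespace IsBruckReilly

variable {M S : Type*} [Monoid M] [Monoid S] {θ : M →* M} {f : ℕ × M × ℕ → S}

/-- The embedding `g ↦ (0, g, 0)` of `M` into its Bruck–Reilly extension. -/
def embedding (hf : IsBruckReilly θ f) : M →* S where
  toFun g := f (0, g, 0)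
  map_one' := hf.map_one
  map_mul' g h := by simp [hf.map_mul]

theorem embedding_injective (hf : IsBruckReilly θ f) : Function.Injective hf.embedding := by
  intro g h hgh
  simpa using hf.bijective.1 hgh

theorem mem_mrange_embedding_iff (hf : IsBruckReilly θ f) {a b : ℕ} {g : M} :
    f (a, g, b) ∈ mrange hf.embedding ↔ a = 0 ∧ b = 0 := by
  constructor
  · rintro ⟨m, hm⟩
    obtain ⟨rfl, -, rfl⟩ : 0 = a ∧ m = g ∧ 0 = b := by simpa using hf.bijective.1 hm
    exact ⟨rfl, rfl⟩
  · rintro ⟨rfl, rfl⟩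
    exact ⟨g, rfl⟩

theorem mul_mem_mrange_embedding_iff (hf : IsBruckReilly θ f) {a b c d : ℕ} {g h : M} :
    f (a, g, b) * f (c, h, d) ∈ mrange hf.embedding ↔ a = 0 ∧ c = b ∧ d = 0 := by
  rw [hf.map_mul, hf.mem_mrange_embedding_iff]
  lia

theorem isLeftUnitary (hf : IsBruckReilly θ f) : IsLeftUnitary (mrange hf.embedding) := by
  rintro _ ⟨g, rfl⟩ s hs
  obtain ⟨⟨c, h, d⟩, rfl⟩ := hf.bijective.2 s
  exact hf.mem_mrange_embedding_iff.2 (hf.mul_mem_mrange_embedding_iff.1 hs).2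

theorem hasFGLeftQuotients (hf : IsBruckReilly θ f) : HasFGLeftQuotients (mrange hf.embedding) := by
  intro x
  obtain ⟨⟨a, g, b⟩, rfl⟩ := hf.bijective.2 x
  by_cases ha : a = 0
  · refine ⟨{f (b, 1, 0)}, fun s => ?_⟩
    have hfactor (h : M) : f (b, h, 0) = f (b, 1, 0) * hf.embedding h := by
      simp [embedding, hf.map_mul]
    simp only [Finset.mem_singleton, exists_eq_left]
    constructor
    · intro hs
      obtain ⟨⟨c, h, d⟩, rfl⟩ := hf.bijective.2 s
      obtain ⟨-, rfl, rfl⟩ := hf.mul_mem_mrange_embedding_iff.1 hs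
      exact ⟨_, ⟨h, rfl⟩, hfactor h⟩
    · rintro ⟨_, ⟨h, rfl⟩, rfl⟩
      rw [← hfactor]
      exact hf.mul_mem_mrange_embedding_iff.2 ⟨ha, rfl, rfl⟩
  · refine ⟨∅, fun s => ?_⟩
    obtain ⟨⟨c, h, d⟩, rfl⟩ := hf.bijective.2 s
    simp [hf.mul_mem_mrange_embedding_iff, ha]

end IsBruckReilly

theorem stmt13 {Mo : Type*} [Monoid Mo] (θ : Mo →* Mo)
    {S : Type*} [Monoid S] (f : ℕ × Mo × ℕ → S)
    (hbij : Function.Bijective f)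
    (hone : f (0, 1, 0) = 1)
    (hmul : ∀ (a : ℕ) (g : Mo) (b : ℕ) (c : ℕ) (h : Mo) (d : ℕ),
      f (a, g, b) * f (c, h, d) =
        f (a + (max b c - b),
           (⇑θ)^[max b c - b] g * (⇑θ)^[max b c - c] h,
           d + (max b c - c)))
    (hcoh : RightCoherent S) :
    RightCoherent Mo :=
  have hf : IsBruckReilly θ f := ⟨hbij, hone, hmul⟩
  stmt13_general hf.embedding_injective hf.isLeftUnitary hf.hasFGLeftQuotients hcoh
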